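/- If U is a universe with 1 ∈ Û, then 1 = {0|·} is U-invertible if and only if U contains no Left end that is a disintegrator. -/

import Mathlib

/-- Augmented (misère) game forms: finitely many Left and Right options,
    possibly adorned with a Left and/or Right tombstone marker. -/
inductive Aug : Type
  | mk (m n : ℕ) (L : Fin m → Aug) (R : Fin n → Aug) (tl tr : Bool) : Aug

namespace Aug

def numL : Aug → ℕ
  | mk m _ _ _ _ _ => m

def numR : Aug → ℕ
  | mk _ n _ _ _ _ => n

def moveL : (G : Aug) → Fin G.numL → Aug
  | mk _ _ L _ _ _ => L

def moveR : (G : Aug) → Fin G.numR → Aug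
  | mk _ _ _ R _ _ => R

def tombL : Aug → Bool
  | mk _ _ _ _ t _ => t

def tombR : Aug → Bool
  | mk _ _ _ _ _ t => t

instance : Zero Aug := ⟨mk 0 0 Fin.elim0 Fin.elim0 false false⟩

/-- Disjunctive sum of augmented forms (tombstones propagate to the sum). -/
protected noncomputable def add : Aug → Aug → Aug := by
  intro x
  induction x with
  | mk m n L R tl tr IHL IHR =>
    intro y
    induction y with
    | mk m' n' L' R' tl' tr' IHL' IHR' =>
      exact mk (m + m') (n + n')
        (Fin.addCases (motive := fun _ => Aug)
          (fun i => IHL i (mk m' n' L' R' tl' tr')) (fun j => IHL' j))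
        (Fin.addCases (motive := fun _ => Aug)
          (fun i => IHR i (mk m' n' L' R' tl' tr')) (fun j => IHR' j))
        (tl || tl') (tr || tr')

noncomputable instance : Add Aug := ⟨Aug.add⟩

/-- Conjugate: swap Left and Right throughout. -/
noncomputable def conj : Aug → Aug := by
  intro G
  induction G with
  | mk m n L R tl tr IHL IHR => exact mk n m IHR IHL tr tl

/-- A genuine game form: no tombstones anywhere. -/
def IsGame : Aug → Prop := by
  intro G
  induction G with
  | mk m n L R tl tr IHL IHR =>
    exact tl = false ∧ tr = false ∧ (∀ i, IHL i) ∧ (∀ j, IHR j)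

/-- Formal birthday (tombstones contribute nothing). -/
noncomputable def birthday : Aug → ℕ := by
  intro G
  induction G with
  | mk m n L R _ _ IHL IHR =>
    exact max (Finset.univ.sup fun i => IHL i + 1) (Finset.univ.sup fun j => IHR j + 1)

/-- `winsF G true` : Left, moving first, wins `G` in misère play
    (a Left end-like position is a first-player win for Left).
    `winsF G false` : Right, moving first, wins `G`. -/
def winsF : Aug → Bool → Prop := by
  intro G
  induction G with
  | mk m n L R tl tr IHL IHR =>
    intro b
    exact match b with
      | true => tl = true ∨ m = 0 ∨ ∃ i, ¬ IHL i false
      | false => tr = true ∨ n = 0 ∨ ∃ j, ¬ IHR j true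

/-- Left outcome is `L`. -/
def oL (G : Aug) : Prop := winsF G true

/-- Right outcome is `L` (Left, moving second, wins). -/
def oR (G : Aug) : Prop := ¬ winsF G false

/-- `outcome G ≥ outcome H` in the misère partial order of outcomes
    (Left prefers larger). -/
def outGe (G H : Aug) : Prop := (oL H → oL G) ∧ (oR H → oR G)

/-- `outcome G = outcome H`. -/
def outEq (G H : Aug) : Prop := (oL G ↔ oL H) ∧ (oR G ↔ oR H)

/-- `G ≥_A H`. -/
def geA (A : Set Aug) (G H : Aug) : Prop := ∀ X ∈ A, outGe (G + X) (H + X)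

/-- `G ≡_A H`. -/
def equivA (A : Set Aug) (G H : Aug) : Prop := ∀ X ∈ A, outEq (G + X) (H + X)

def LeftEnd (G : Aug) : Prop := G.numL = 0
def RightEnd (G : Aug) : Prop := G.numR = 0
def LeftEndLike (G : Aug) : Prop := G.tombL = true ∨ G.numL = 0
def RightEndLike (G : Aug) : Prop := G.tombR = true ∨ G.numR = 0

/-- `G` is Left `A`-strong. -/
def LeftStrong (A : Set Aug) (G : Aug) : Prop :=
  ∀ X ∈ A, LeftEnd X → winsF (G + X) true

/-- `G` is Right `A`-strong. -/
def RightStrong (A : Set Aug) (G : Aug) : Prop :=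
  ∀ X ∈ A, RightEnd X → winsF (G + X) false

/-- Hereditarily closed set of games. -/
def Hereditary (A : Set Aug) : Prop :=
  ∀ G ∈ A, (∀ i, G.moveL i ∈ A) ∧ (∀ j, G.moveR j ∈ A)

/-- An (absolute) universe of misère games. -/
structure IsUniverse (U : Set Aug) : Prop where
  games : ∀ G ∈ U, IsGame G
  zero_mem : (0 : Aug) ∈ U
  add_mem : ∀ G ∈ U, ∀ H ∈ U, G + H ∈ U
  conj_mem : ∀ G ∈ U, conj G ∈ U
  moveL_mem : ∀ G ∈ U, ∀ i, G.moveL i ∈ U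
  moveR_mem : ∀ G ∈ U, ∀ j, G.moveR j ∈ U
  dicotic : ∀ (m n : ℕ) (L : Fin m → Aug) (R : Fin n → Aug), 0 < m → 0 < n →
    (∀ i, L i ∈ U) → (∀ j, R j ∈ U) → mk m n L R false false ∈ U

/-- `Û`: the augmented forms admitting a `U`-expansion, i.e. equivalent
    modulo `U` to some member of `U`. -/
def hatU (U : Set Aug) : Set Aug := {G | ∃ G' ∈ U, equivA U G G'}

/-- `G` is `A`-invertible (with inverse in `A`). -/
def Invertible (A : Set Aug) (G : Aug) : Prop := ∃ H ∈ A, equivA A (G + H) 0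

/-- `G` is `U`-invertible with inverse in `Û`. -/
def InvertibleHat (U : Set Aug) (G : Aug) : Prop := ∃ H ∈ hatU U, equivA U (G + H) 0

/-- `G` is conjugate `A`-invertible. -/
def ConjInvertible (A : Set Aug) (G : Aug) : Prop :=
  conj G ∈ A ∧ equivA A (G + conj G) 0

/-- `A` is a monoid of games: a set of games containing `0`, closed under
    disjunctive sum, on which `≡_A` is a congruence. -/
structure IsMonoidOfGames (A : Set Aug) : Prop where
  games : ∀ G ∈ A, IsGame G
  zero_mem : (0 : Aug) ∈ A
  add_mem : ∀ G ∈ A, ∀ H ∈ A, G + H ∈ A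
  congr : ∀ G ∈ A, ∀ H ∈ A, ∀ J ∈ A, equivA A G H → equivA A (G + J) (H + J)

/-- `U`-simplest form: hereditarily, no dominated options, no reversible
    options, and no unnecessary tombstones. -/
def Simplest (U : Set Aug) : Aug → Prop := by
  intro G
  induction G with
  | mk m n L R tl tr IHL IHR =>
    exact
      (∀ i i' : Fin m, geA U (L i) (L i') → i = i') ∧
      (∀ j j' : Fin n, geA U (R j) (R j') → j = j') ∧
      (∀ i : Fin m, ∀ jj : Fin (L i).numR, ¬ geA U (mk m n L R tl tr) ((L i).moveR jj)) ∧
      (∀ j : Fin n, ∀ ii : Fin (R j).numL, ¬ geA U ((R j).moveL ii) (mk m n L R tl tr)) ∧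
      (tl = true → ¬ equivA U (mk m n L R tl tr) (mk m n L R false tr)) ∧
      (tr = true → ¬ equivA U (mk m n L R tl tr) (mk m n L R tl false)) ∧
      (∀ i, IHL i) ∧ (∀ j, IHR j)

lemma birthday_mk (m n : ℕ) (L : Fin m → Aug) (R : Fin n → Aug) (tl tr : Bool) :
    birthday (mk m n L R tl tr) =
      max (Finset.univ.sup fun i => birthday (L i) + 1)
          (Finset.univ.sup fun j => birthday (R j) + 1) := rfl

lemma birthday_moveL_lt : ∀ (G : Aug) (i : Fin G.numL), birthday (G.moveL i) < birthday G := by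
  intro G
  cases G with
  | mk m n L R tl tr =>
    intro i
    show birthday (L i) < birthday (mk m n L R tl tr)
    rw [birthday_mk]
    have h1 : birthday (L i) + 1 ≤ Finset.univ.sup (fun i => birthday (L i) + 1) :=
      Finset.le_sup (f := fun i => birthday (L i) + 1) (Finset.mem_univ i)
    exact lt_of_lt_of_le (Nat.lt_succ_self _) (h1.trans (le_max_left _ _))

lemma birthday_moveR_lt : ∀ (G : Aug) (j : Fin G.numR), birthday (G.moveR j) < birthday G := by
  intro G
  cases G with
  | mk m n L R tl tr =>
    intro j
    show birthday (R j) < birthday (mk m n L R tl tr)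
    rw [birthday_mk]
    have h1 : birthday (R j) + 1 ≤ Finset.univ.sup (fun j => birthday (R j) + 1) :=
      Finset.le_sup (f := fun j => birthday (R j) + 1) (Finset.mem_univ j)
    exact lt_of_lt_of_le (Nat.lt_succ_self _) (h1.trans (le_max_right _ _))

/-- A disintegrator. -/
def Disintegrator (G : Aug) : Prop :=
  ∃ j : Fin G.numR, (G.moveR j).numL ≠ 0 ∧
    ∀ i : Fin (G.moveR j).numL,
      ¬ winsF ((G.moveR j).moveL i) true ∨ Disintegrator ((G.moveR j).moveL i)
termination_by birthday G
decreasing_by exact lt_trans (birthday_moveL_lt _ _) (birthday_moveR_lt _ _)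

/-- A starkiller. -/
def Starkiller (G : Aug) : Prop :=
  ∃ j : Fin G.numR, winsF (G.moveR j) false ∧
    ∀ i : Fin (G.moveR j).numL,
      ¬ winsF ((G.moveR j).moveL i) true ∨ Starkiller ((G.moveR j).moveL i)
termination_by birthday G
decreasing_by exact lt_trans (birthday_moveL_lt _ _) (birthday_moveR_lt _ _)

def one : Aug := mk 1 0 (fun _ => 0) Fin.elim0 false false
def two : Aug := mk 1 0 (fun _ => one) Fin.elim0 false false
def star : Aug := mk 1 1 (fun _ => 0) (fun _ => 0) false false
/-- `conjugate(1) = {·|0}`. -/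
def oneConj : Aug := mk 0 1 Fin.elim0 (fun _ => 0) false false
/-- `{·|2}`. -/
def endTwo : Aug := mk 0 1 Fin.elim0 (fun _ => two) false false

/-- `n` copies of `G` summed. -/
noncomputable def nCopies : ℕ → Aug → Aug
  | 0, _ => 0
  | n + 1, G => nCopies n G + G

/-- Dicot: every subposition has both or neither kind of option. -/
def Dicot : Aug → Prop := by
  intro G
  induction G with
  | mk m n L R _ _ IHL IHR => exact (m = 0 ↔ n = 0) ∧ (∀ i, IHL i) ∧ (∀ j, IHR j)

/-- Hereditarily a Left end. -/
def LeftEndHered : Aug → Prop := by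
  intro G
  induction G with
  | mk m n L R _ _ IHL IHR => exact m = 0 ∧ (∀ j, IHR j)

/-- Hereditarily a Right end. -/
def RightEndHered : Aug → Prop := by
  intro G
  induction G with
  | mk m n L R _ _ IHL IHR => exact n = 0 ∧ (∀ i, IHL i)

/-- Dead-ending: once a player has no move in a subposition, that player
    never again has a move. -/
def DeadEnding : Aug → Prop := by
  intro G
  induction G with
  | mk m n L R tl tr IHL IHR =>
    exact (m = 0 → LeftEndHered (mk m n L R tl tr)) ∧
      (n = 0 → RightEndHered (mk m n L R tl tr)) ∧
      (∀ i, IHL i) ∧ (∀ j, IHR j)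

/-- Left weak set of games. -/
def LeftWeak (A : Set Aug) : Prop := ∀ G : Aug, LeftStrong A G ↔ LeftEndLike G

/-- Right weak set of games. -/
def RightWeak (A : Set Aug) : Prop := ∀ G : Aug, RightStrong A G ↔ RightEndLike G

end Aug

namespace Aug

lemma oL_iff (G : Aug) : oL G ↔ G.tombL = true ∨ G.numL = 0 ∨ ∃ i, oR (G.moveL i) := by
  cases G; exact Iff.rfl

lemma winsF_false_iff (G : Aug) :
    winsF G false ↔ G.tombR = true ∨ G.numR = 0 ∨ ∃ j, ¬ oL (G.moveR j) := by
  cases G; exact Iff.rfl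

lemma oR_iff (G : Aug) : oR G ↔ G.tombR = false ∧ G.numR ≠ 0 ∧ ∀ j, oL (G.moveR j) := by
  unfold oR
  rw [winsF_false_iff]
  push Not
  simp

lemma add_mk (m n : ℕ) (L : Fin m → Aug) (R : Fin n → Aug) (tl tr : Bool)
    (m' n' : ℕ) (L' : Fin m' → Aug) (R' : Fin n' → Aug) (tl' tr' : Bool) :
    mk m n L R tl tr + mk m' n' L' R' tl' tr' =
      mk (m + m') (n + n')
        (Fin.addCases (motive := fun _ => Aug)
          (fun i => L i + mk m' n' L' R' tl' tr') (fun j => mk m n L R tl tr + L' j))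
        (Fin.addCases (motive := fun _ => Aug)
          (fun i => R i + mk m' n' L' R' tl' tr') (fun j => mk m n L R tl tr + R' j))
        (tl || tl') (tr || tr') := rfl

lemma oL_add (A B : Aug) : oL (A + B) ↔ A.tombL = true ∨ B.tombL = true ∨
    (A.numL = 0 ∧ B.numL = 0) ∨ (∃ i, oR (A.moveL i + B)) ∨ ∃ j, oR (A + B.moveL j) := by
  obtain ⟨m, n, L, R, tl, tr⟩ := A
  obtain ⟨m', n', L', R', tl', tr'⟩ := B
  rw [add_mk, oL_iff]
  simp only [tombL, numL, moveL, Bool.or_eq_true, Nat.add_eq_zero_iff, or_assoc]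
  refine or_congr Iff.rfl (or_congr Iff.rfl (or_congr Iff.rfl ?_))
  constructor
  · rintro ⟨i, hi⟩
    induction i using Fin.addCases with
    | left i => left; exact ⟨i, by simpa using hi⟩
    | right i => right; exact ⟨i, by simpa using hi⟩
  · rintro (⟨i, hi⟩ | ⟨i, hi⟩)
    · exact ⟨Fin.castAdd _ i, by simpa using hi⟩
    · exact ⟨Fin.natAdd _ i, by simpa using hi⟩

lemma oR_add (A B : Aug) : oR (A + B) ↔ A.tombR = false ∧ B.tombR = false ∧
    (A.numR ≠ 0 ∨ B.numR ≠ 0) ∧ (∀ i, oL (A.moveR i + B)) ∧ ∀ j, oL (A + B.moveR j) := by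
  obtain ⟨m, n, L, R, tl, tr⟩ := A
  obtain ⟨m', n', L', R', tl', tr'⟩ := B
  rw [add_mk, oR_iff]
  simp only [tombR, numR, moveR, Bool.or_eq_false_iff, and_assoc]
  refine and_congr Iff.rfl (and_congr Iff.rfl (and_congr (by omega) ?_))
  constructor
  · intro h
    exact ⟨fun i => by simpa using h (Fin.castAdd _ i), fun i => by simpa using h (Fin.natAdd _ i)⟩
  · rintro ⟨h1, h2⟩ i
    induction i using Fin.addCases with
    | left i => simpa using h1 i
    | right i => simpa using h2 i

/-- induction on moves -/
lemma ind {P : Aug → Prop}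
    (h : ∀ G : Aug, (∀ i, P (G.moveL i)) → (∀ j, P (G.moveR j)) → P G) (G : Aug) : P G := by
  induction G with
  | mk m n L R tl tr IHL IHR => exact h _ IHL IHR

/-- same outcomes in every sum (as a left summand) -/
def OEq (A B : Aug) : Prop := ∀ Y, (oL (A + Y) ↔ oL (B + Y)) ∧ (oR (A + Y) ↔ oR (B + Y))

lemma not_fin0 {G : Aug} (h : G.numL = 0) (i : Fin G.numL) : False := by
  rw [h] at i; exact i.elim0

lemma zero_add_moves (D : Aug) : (0 + D : Aug).tombL = D.tombL ∧ (0 + D : Aug).tombR = D.tombR ∧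
    (0 + D : Aug).numL = D.numL ∧ (0 + D : Aug).numR = D.numR ∧
    (∀ i, ∃ i', (0 + D : Aug).moveL i = 0 + D.moveL i') ∧
    (∀ i', ∃ i, (0 + D : Aug).moveL i = 0 + D.moveL i') ∧
    (∀ i, ∃ i', (0 + D : Aug).moveR i = 0 + D.moveR i') ∧
    (∀ i', ∃ i, (0 + D : Aug).moveR i = 0 + D.moveR i') := by
  obtain ⟨m, n, L, R, tl, tr⟩ := D
  have e : (0 : Aug) = mk 0 0 Fin.elim0 Fin.elim0 false false := rfl
  rw [e, add_mk]
  simp only [tombL, tombR, numL, numR, moveL, moveR]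
  refine ⟨by simp, by simp, by omega, by omega, ?_, ?_, ?_, ?_⟩
  · intro i
    induction i using Fin.addCases with
    | left i => exact i.elim0
    | right i => exact ⟨i, Fin.addCases_right _⟩
  · intro i; exact ⟨Fin.natAdd _ i, Fin.addCases_right _⟩
  · intro i
    induction i using Fin.addCases with
    | left i => exact i.elim0
    | right i => exact ⟨i, Fin.addCases_right _⟩
  · intro i; exact ⟨Fin.natAdd _ i, Fin.addCases_right _⟩

lemma zero_add_OEq (D : Aug) : OEq (0 + D) D := by
  induction D using ind with
  | h D ihL ihR =>
    intro Y
    obtain ⟨h1, h2, h3, h4, h5, h6, h7, h8⟩ := zero_add_moves D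
    induction Y using ind with
    | h Y jL jR =>
      constructor
      · rw [oL_add, oL_add, h1]
        refine or_congr Iff.rfl (or_congr Iff.rfl (or_congr (by rw [h3]) (or_congr ?_ ?_)))
        · constructor
          · rintro ⟨i, hi⟩
            obtain ⟨i', e⟩ := h5 i
            rw [e] at hi
            exact ⟨i', ((ihL i' Y).2).1 hi⟩
          · rintro ⟨i', hi⟩
            obtain ⟨i, e⟩ := h6 i'
            exact ⟨i, by rw [e]; exact ((ihL i' Y).2).2 hi⟩
        · exact exists_congr fun j => (jL j).2
      · rw [oR_add, oR_add, h2]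
        refine and_congr Iff.rfl (and_congr Iff.rfl (and_congr (by rw [h4]) (and_congr ?_ ?_)))
        · constructor
          · intro h i'
            obtain ⟨i, e⟩ := h8 i'
            have := h i
            rw [e] at this
            exact ((ihR i' Y).1).1 this
          · intro h i
            obtain ⟨i', e⟩ := h7 i
            rw [e]; exact ((ihR i' Y).1).2 (h i')
        · exact forall_congr' fun j => (jR j).1

lemma zero_add_out (X : Aug) : (oL (0 + X) ↔ oL X) ∧ (oR (0 + X) ↔ oR X) := by
  induction X using ind with
  | h X ihL ihR =>
    constructor
    · rw [oL_add, oL_iff X]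
      constructor
      · rintro (h | h | h | ⟨i, hi⟩ | ⟨j, hj⟩)
        · exact absurd h (by decide)
        · exact Or.inl h
        · exact Or.inr (Or.inl h.2)
        · exact Fin.elim0 i
        · exact Or.inr (Or.inr ⟨j, (ihL j).2.1 hj⟩)
      · rintro (h | h | ⟨j, hj⟩)
        · exact Or.inr (Or.inl h)
        · exact Or.inr (Or.inr (Or.inl ⟨rfl, h⟩))
        · exact Or.inr (Or.inr (Or.inr (Or.inr ⟨j, (ihL j).2.2 hj⟩)))
    · rw [oR_add, oR_iff X]
      constructor
      · rintro ⟨_, h2, h3, _, h5⟩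
        refine ⟨h2, ?_, fun j => (ihR j).1.1 (h5 j)⟩
        rcases h3 with h3 | h3
        · exact absurd rfl h3
        · exact h3
      · rintro ⟨h2, h3, h5⟩
        exact ⟨rfl, h2, Or.inr h3, fun i => Fin.elim0 i, fun j => (ihR j).1.2 (h5 j)⟩

/-- `A` is at least as good as `B` for Left in every sum. -/
def UGe (A B : Aug) : Prop := ∀ D, (oL (D + B) → oL (D + A)) ∧ (oR (D + B) → oR (D + A))

lemma UGe_of {A B : Aug} (h1 : B.tombL = false) (h2 : B.numL ≠ 0) (h3 : A.tombR = false)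
    (h4 : A.numR ≠ 0) (h5 : ∀ i, ∃ a, A.moveL a = B.moveL i)
    (h6 : ∀ j, ∃ k, (A.moveR j).moveL k = B) : UGe A B := by
  intro D
  induction D using ind with
  | h D ihL ihR =>
    constructor
    · intro h
      rw [oL_add] at h ⊢
      rcases h with h | h | h | ⟨i, hi⟩ | ⟨j, hj⟩
      · exact Or.inl h
      · rw [h1] at h; cases h
      · exact absurd h.2 h2
      · exact Or.inr (Or.inr (Or.inr (Or.inl ⟨i, (ihL i).2 hi⟩)))
      · obtain ⟨a, ha⟩ := h5 j
        exact Or.inr (Or.inr (Or.inr (Or.inr ⟨a, by rw [ha]; exact hj⟩)))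
    · intro h
      have h0 := h
      rw [oR_add] at h
      rw [oR_add]
      refine ⟨h.1, h3, Or.inr h4, fun i => (ihR i).1 (h.2.2.2.1 i), fun j => ?_⟩
      obtain ⟨k, hk⟩ := h6 j
      rw [oL_add]
      exact Or.inr (Or.inr (Or.inr (Or.inr ⟨k, by rw [hk]; exact h0⟩)))

lemma exists_mk {U : Set Aug} (hU : IsUniverse U) {ι κ : Type} [Fintype ι] [Fintype κ]
    [Nonempty ι] [Nonempty κ] (f : ι → Aug) (g : κ → Aug) (hf : ∀ i, f i ∈ U)
    (hg : ∀ i, g i ∈ U) :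
    ∃ Y ∈ U, Y.numL ≠ 0 ∧ Y.numR ≠ 0 ∧ (∀ i, ∃ a, Y.moveL a = f i) ∧
      (∀ a, ∃ i, Y.moveL a = f i) ∧ (∀ i, ∃ a, Y.moveR a = g i) ∧
      (∀ a, ∃ i, Y.moveR a = g i) := by
  refine ⟨mk (Fintype.card ι) (Fintype.card κ) (fun a => f ((Fintype.equivFin ι).symm a))
    (fun a => g ((Fintype.equivFin κ).symm a)) false false, ?_, ?_, ?_, ?_, ?_, ?_, ?_⟩
  · exact hU.dicotic _ _ _ _ Fintype.card_pos Fintype.card_pos (fun i => hf _) (fun i => hg _)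
  · exact Fintype.card_ne_zero
  · exact Fintype.card_ne_zero
  · exact fun i => ⟨Fintype.equivFin ι i, by simp [moveL]⟩
  · exact fun a => ⟨_, rfl⟩
  · exact fun i => ⟨Fintype.equivFin κ i, by simp [moveR]⟩
  · exact fun a => ⟨_, rfl⟩

lemma IsUniverse.tomb {U : Set Aug} (hU : IsUniverse U) {G : Aug} (h : G ∈ U) :
    G.tombL = false ∧ G.tombR = false := by
  have := hU.games G h
  cases G
  exact ⟨this.1, this.2.1⟩

lemma oL_add_left {A B : Aug} (i) (h : oR (A.moveL i + B)) : oL (A + B) := by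
  rw [oL_add]; exact Or.inr (Or.inr (Or.inr (Or.inl ⟨i, h⟩)))

lemma oL_add_right {A B : Aug} (i) (h : oR (A + B.moveL i)) : oL (A + B) := by
  rw [oL_add]; exact Or.inr (Or.inr (Or.inr (Or.inr ⟨i, h⟩)))

lemma one_add_moves (D : Aug) : (one + D : Aug).tombL = D.tombL ∧
    (one + D : Aug).tombR = D.tombR ∧
    (one + D : Aug).numL ≠ 0 ∧ (one + D : Aug).numR = D.numR ∧
    (∀ i, (one + D : Aug).moveL i = 0 + D ∨ ∃ i', (one + D : Aug).moveL i = one + D.moveL i') ∧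
    (∃ i, (one + D : Aug).moveL i = 0 + D) ∧
    (∀ i', ∃ i, (one + D : Aug).moveL i = one + D.moveL i') ∧
    (∀ i, ∃ i', (one + D : Aug).moveR i = one + D.moveR i') ∧
    (∀ i', ∃ i, (one + D : Aug).moveR i = one + D.moveR i') := by
  obtain ⟨m, n, L, R, tl, tr⟩ := D
  rw [one, add_mk]
  simp only [tombL, tombR, numL, numR, moveL, moveR]
  refine ⟨by simp, by simp, by omega, by omega, ?_, ?_, ?_, ?_, ?_⟩
  · intro i
    induction i using Fin.addCases with
    | left i => left; simp
    | right i => right; exact ⟨i, Fin.addCases_right _⟩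
  · exact ⟨Fin.castAdd _ 0, by simp⟩
  · intro i; exact ⟨Fin.natAdd _ i, Fin.addCases_right _⟩
  · intro i
    induction i using Fin.addCases with
    | left i => exact i.elim0
    | right i => exact ⟨i, Fin.addCases_right _⟩
  · intro i; exact ⟨Fin.natAdd _ i, Fin.addCases_right _⟩

lemma oL_one_add (D Y : Aug) : oL (one + D + Y) ↔ D.tombL = true ∨ Y.tombL = true ∨
    oR (D + Y) ∨ (∃ i, oR (one + D.moveL i + Y)) ∨ ∃ j, oR (one + D + Y.moveL j) := by
  obtain ⟨h1, h2, h3, h4, h5, ⟨i0, h6⟩, h7, h8, h9⟩ := one_add_moves D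
  rw [oL_add, h1]
  constructor
  · rintro (h | h | h | ⟨i, hi⟩ | h)
    · exact Or.inl h
    · exact Or.inr (Or.inl h)
    · exact absurd h.1 h3
    · rcases h5 i with e | ⟨i', e⟩
      · rw [e] at hi
        exact Or.inr (Or.inr (Or.inl ((zero_add_OEq D Y).2.1 hi)))
      · rw [e] at hi
        exact Or.inr (Or.inr (Or.inr (Or.inl ⟨i', hi⟩)))
    · exact Or.inr (Or.inr (Or.inr (Or.inr h)))
  · rintro (h | h | h | ⟨i, hi⟩ | h)
    · exact Or.inl h
    · exact Or.inr (Or.inl h)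
    · exact Or.inr (Or.inr (Or.inr (Or.inl ⟨i0, by rw [h6]; exact (zero_add_OEq D Y).2.2 h⟩)))
    · obtain ⟨i', e⟩ := h7 i
      exact Or.inr (Or.inr (Or.inr (Or.inl ⟨i', by rw [e]; exact hi⟩)))
    · exact Or.inr (Or.inr (Or.inr (Or.inr h)))

lemma oR_one_add (D Y : Aug) : oR (one + D + Y) ↔ D.tombR = false ∧ Y.tombR = false ∧
    (D.numR ≠ 0 ∨ Y.numR ≠ 0) ∧ (∀ i, oL (one + D.moveR i + Y)) ∧
      ∀ j, oL (one + D + Y.moveR j) := by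
  obtain ⟨h1, h2, h3, h4, h5, ⟨i0, h6⟩, h7, h8, h9⟩ := one_add_moves D
  rw [oR_add, h2]
  refine and_congr Iff.rfl (and_congr Iff.rfl (and_congr (by rw [h4]) (and_congr ?_ Iff.rfl)))
  constructor
  · intro h i
    obtain ⟨i', e⟩ := h9 i
    rw [← e]; exact h i'
  · intro h i
    obtain ⟨i', e⟩ := h8 i
    rw [e]; exact h i'

def Wit (Q : Aug) : Prop := Q.numL ≠ 0 ∧ ∀ i, ¬ oL (Q.moveL i) ∨ Disintegrator (Q.moveL i)

lemma disint_iff (G : Aug) : Disintegrator G ↔ ∃ j, Wit (G.moveR j) := by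
  rw [Disintegrator]; exact Iff.rfl

lemma numL_ne_of_not_oL {G : Aug} (h : ¬ oL G) : G.numL ≠ 0 := by
  intro h0; exact h ((oL_iff G).2 (Or.inr (Or.inl h0)))

lemma key {U : Set Aug} (hU : IsUniverse U) : ∀ (n : ℕ) (Q : Aug), birthday Q < n → Q ∈ U →
    Wit Q → ∃ Y ∈ U, ¬ oL Y ∧ Y.numR ≠ 0 ∧ (∀ j, UGe (Y.moveR j) Q) ∧
      ∀ D, (oL (D + Q) → oL (one + D + Y)) ∧ (oR (D + Q) → oR (one + D + Y)) := by
  intro n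
  induction n with
  | zero => intro Q h; omega
  | succ n ih =>
    intro Q hb hQ hW
    obtain ⟨hne, hW⟩ := hW
    have hN : ∀ i : Fin Q.numL, ∃ N ∈ U, ¬ oL N ∧
        ∀ D, oR (D + Q.moveL i) → ∀ Y, UGe Y N → oL (one + D + Y) := by
      intro i
      have hi := hU.moveL_mem Q hQ i
      rcases hW i with h | h
      · refine ⟨_, hi, h, fun D hD Y hY => ?_⟩
        rw [oL_one_add]
        exact Or.inr (Or.inr (Or.inl ((hY D).2 hD)))
      · obtain ⟨j, hj⟩ := (disint_iff _).1 h
        have b1 := birthday_moveL_lt Q i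
        have b2 := birthday_moveR_lt (Q.moveL i) j
        obtain ⟨Y', hY', g1, _, _, g4⟩ := ih _ (by omega) (hU.moveR_mem _ hi j) hj
        refine ⟨Y', hY', g1, fun D hD Y hY => ?_⟩
        exact (hY _).1 ((g4 D).1 (((oR_add _ _).1 hD).2.2.2.2 j))
    choose N hNU hNL hN using hN
    have i0 : Fin Q.numL := ⟨0, Nat.pos_of_ne_zero hne⟩
    have : Nonempty (Fin Q.numL) := ⟨i0⟩
    obtain ⟨V, hV, _, _, v1, _, _, _⟩ := exists_mk hU (fun _ : Unit => Q) (fun _ : Unit => 0)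
      (fun _ => hQ) (fun _ => hU.zero_mem)
    obtain ⟨Z, hZ, z1, z2, z3, z4, z5, z6⟩ := exists_mk hU
      (Sum.elim (fun i : Fin Q.numL => Q.moveL i) N) (fun _ : Unit => V)
      (by rintro (i | i)
          · exact hU.moveL_mem Q hQ i
          · exact hNU i) (fun _ => hV)
    have : Nonempty (Σ i : Fin Q.numL, Fin (N i).numL) :=
      ⟨⟨i0, ⟨0, Nat.pos_of_ne_zero (numL_ne_of_not_oL (hNL i0))⟩⟩⟩
    obtain ⟨Y, hY, y1, y2, y3, y4, y5, y6⟩ := exists_mk hU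
      (fun p : (Σ i : Fin Q.numL, Fin (N i).numL) => (N p.1).moveL p.2) (fun _ : Unit => Z)
      (fun p => hU.moveL_mem _ (hNU p.1) p.2) (fun _ => hZ)
    have hZQ : UGe Z Q := by
      refine UGe_of (hU.tomb hQ).1 hne (hU.tomb hZ).2 z2 (fun i => z3 (Sum.inl i)) ?_
      intro j
      obtain ⟨_, e⟩ := z6 j
      rw [e]; exact v1 ()
    have hYN : ∀ i, UGe Y (N i) := by
      intro i
      refine UGe_of (hU.tomb (hNU i)).1 (numL_ne_of_not_oL (hNL i)) (hU.tomb hY).2 y2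
        (fun k => y3 ⟨i, k⟩) ?_
      intro j
      obtain ⟨_, e⟩ := y6 j
      rw [e]; exact z3 (Sum.inr i)
    refine ⟨Y, hY, ?_, y2, ?_, ?_⟩
    · rw [oL_iff]
      rintro (h | h | ⟨a, ha⟩)
      · rw [(hU.tomb hY).1] at h; cases h
      · exact y1 h
      · obtain ⟨p, e⟩ := y4 a
        rw [e] at ha
        exact hNL p.1 ((oL_iff _).2 (Or.inr (Or.inr ⟨p.2, ha⟩)))
    · intro j
      obtain ⟨_, e⟩ := y6 j
      rw [e]; exact hZQ
    · intro D
      induction D using ind with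
      | h D ihL ihR =>
        constructor
        · intro h
          rw [oL_add] at h
          rcases h with h | h | h | ⟨i, hi⟩ | ⟨j, hj⟩
          · rw [oL_one_add]; exact Or.inl h
          · rw [(hU.tomb hQ).1] at h; cases h
          · exact absurd h.2 hne
          · rw [oL_one_add]; exact Or.inr (Or.inr (Or.inr (Or.inl ⟨i, (ihL i).2 hi⟩)))
          · exact hN j D hj Y (hYN j)
        · intro h
          have h0 := h
          rw [oR_add] at h
          rw [oR_one_add]
          refine ⟨h.1, (hU.tomb hY).2, Or.inr y2, fun i => (ihR i).1 (h.2.2.2.1 i), fun j => ?_⟩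
          obtain ⟨_, e⟩ := y6 j
          rw [e, oL_one_add]
          exact Or.inr (Or.inr (Or.inl ((hZQ D).2 h0)))

lemma key2 {U : Set Aug} (hU : IsUniverse U) {X : Aug} (hX : X ∈ U) (hE : LeftEnd X)
    (hd : Disintegrator X) : ∃ Y ∈ U, ¬ oL Y ∧
      ∀ D, (oL (one + D + X) → oL (one + D + Y)) ∧ (oR (one + D + X) → oR (one + D + Y)) := by
  obtain ⟨j, hj⟩ := (disint_iff X).1 hd
  obtain ⟨Y, hY, g1, g2, g3, g4⟩ := key hU _ _ (Nat.lt_succ_self _) (hU.moveR_mem X hX j) hj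
  refine ⟨Y, hY, g1, fun D => ?_⟩
  induction D using ind with
  | h D ihL ihR =>
    constructor
    · intro h
      rw [oL_one_add] at h
      rcases h with h | h | h | ⟨i, hi⟩ | ⟨i, hi⟩
      · rw [oL_one_add]; exact Or.inl h
      · rw [(hU.tomb hX).1] at h; cases h
      · exact (g4 D).1 (((oR_add _ _).1 h).2.2.2.2 j)
      · rw [oL_one_add]; exact Or.inr (Or.inr (Or.inr (Or.inl ⟨i, (ihL i).2 hi⟩)))
      · exact (not_fin0 hE i).elim
    · intro h
      rw [oR_one_add] at h
      rw [oR_one_add]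
      exact ⟨h.1, (hU.tomb hY).2, Or.inr g2, fun i => (ihR i).1 (h.2.2.2.1 i),
        fun k => (g3 k _).1 (h.2.2.2.2 j)⟩

lemma forward {U : Set Aug} (hU : IsUniverse U) (h : InvertibleHat U one) :
    ∀ X ∈ U, LeftEnd X → ¬ Disintegrator X := by
  intro X hX hE hd
  obtain ⟨H, _, hH⟩ := h
  obtain ⟨Y, hY, hn, hk⟩ := key2 hU hX hE hd
  have h1 : oL (one + H + X) :=
    (hH X hX).1.2 ((zero_add_out X).1.2 ((oL_iff X).2 (Or.inr (Or.inl hE))))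
  exact hn ((zero_add_out Y).1.1 ((hH Y hY).1.1 ((hk H).1 h1)))

lemma conj_mk (m n : ℕ) (L : Fin m → Aug) (R : Fin n → Aug) (tl tr : Bool) :
    conj (mk m n L R tl tr) = mk n m (fun j => conj (R j)) (fun i => conj (L i)) tr tl := rfl

lemma conj_conj (G : Aug) : conj (conj G) = G := by
  induction G with
  | mk m n L R tl tr IHL IHR => simp [conj_mk, IHL, IHR]

lemma conj_oL (G : Aug) : (oL (conj G) ↔ ¬ oR G) ∧ (oR (conj G) ↔ ¬ oL G) := by
  induction G with
  | mk m n L R tl tr IHL IHR =>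
    rw [conj_mk, oL_iff, oR_iff, oL_iff, oR_iff]
    simp only [tombL, tombR, numL, numR, moveL, moveR, IHL, IHR]
    constructor
    · push Not
      cases tr <;> simp <;> tauto
    · push Not
      simp

lemma conj_add (A : Aug) : ∀ B, conj (A + B) = conj A + conj B := by
  induction A with
  | mk m n L R tl tr IHL IHR =>
    intro B
    induction B with
    | mk m' n' L' R' tl' tr' JL JR =>
      rw [add_mk, conj_mk, conj_mk, conj_mk, add_mk]
      congr 1
      · funext i
        induction i using Fin.addCases with
        | left i => simp [IHR, conj_mk]
        | right i => simp only [Fin.addCases_right]; rw [JR, conj_mk]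
      · funext i
        induction i using Fin.addCases with
        | left i => simp [IHL, conj_mk]
        | right i => simp only [Fin.addCases_right]; rw [JL, conj_mk]

lemma conj_zero : conj 0 = 0 := by
  show conj (mk 0 0 Fin.elim0 Fin.elim0 false false) = mk 0 0 Fin.elim0 Fin.elim0 false false
  rw [conj_mk]; congr 1 <;> (funext i; exact i.elim0)

lemma conj_one : conj one = oneConj := by
  rw [one, oneConj, conj_mk, conj_zero]; congr 1; funext i; exact i.elim0

lemma conj_equiv {U : Set Aug} (hU : IsUniverse U) {G H : Aug} (h : equivA U G H) :
    equivA U (conj G) (conj H) := by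
  intro X hX
  have := h _ (hU.conj_mem X hX)
  have e1 : conj G + X = conj (G + conj X) := by rw [conj_add, conj_conj]
  have e2 : conj H + X = conj (H + conj X) := by rw [conj_add, conj_conj]
  unfold outEq
  rw [e1, e2, (conj_oL _).1, (conj_oL _).1, (conj_oL _).2, (conj_oL _).2]
  exact ⟨not_congr this.2, not_congr this.1⟩

/-- Left wins second on `oneConj + X`. -/
lemma oneConj_lemma {U : Set Aug} (hU : IsUniverse U) : ∀ (n : ℕ) (X : Aug), birthday X < n →
    X ∈ U → oL X → ¬ Disintegrator X → oR (oneConj + X) := by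
  intro n
  induction n with
  | zero => intro X h; omega
  | succ n ih =>
    intro X hb hX hL hd
    rw [oR_add]
    refine ⟨rfl, (hU.tomb hX).2, Or.inl (by simp [oneConj, numR]), fun i => ?_, fun j => ?_⟩
    · exact (zero_add_out X).1.2 hL
    · by_cases h0 : (X.moveR j).numL = 0
      · rw [oL_add]; exact Or.inr (Or.inr (Or.inl ⟨rfl, h0⟩))
      · have : ¬ Wit (X.moveR j) := fun h => hd ((disint_iff X).2 ⟨j, h⟩)
        unfold Wit at this
        push Not at this
        obtain ⟨i, hi1, hi2⟩ := this h0
        have b1 := birthday_moveR_lt X j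
        have b2 := birthday_moveL_lt (X.moveR j) i
        exact oL_add_right i (ih _ (by omega) (hU.moveL_mem _ (hU.moveR_mem X hX j) i) hi1 hi2)

lemma claimA {U : Set Aug} (hU : IsUniverse U)
    (hd : ∀ X ∈ U, LeftEnd X → ¬ Disintegrator X) (S : Aug)
    (s2 : S.tombR = false) (s3 : S.numR ≠ 0)
    (s4 : ∃ i, ∀ Y, oR (oneConj + Y) → oR (S.moveL i + Y))
    (s5 : ∀ j, ∀ Y, oR Y → oL (S.moveR j + Y)) (X : Aug) :
    X ∈ U → (oL X → oL (S + X)) ∧ (oR X → oR (S + X)) := by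
  induction X using ind with
  | h X ihL ihR =>
    intro hX
    constructor
    · intro h
      by_cases hE : X.numL = 0
      · obtain ⟨i, hi⟩ := s4
        exact oL_add_left i (hi X (oneConj_lemma hU _ X (Nat.lt_succ_self _) hX h (hd X hX hE)))
      · rcases (oL_iff X).1 h with h | h | ⟨i, hi⟩
        · rw [(hU.tomb hX).1] at h; cases h
        · exact absurd h hE
        · exact oL_add_right i ((ihL i (hU.moveL_mem X hX i)).2 hi)
    · intro h
      rw [oR_add]
      exact ⟨s2, (hU.tomb hX).2, Or.inl s3, fun j => s5 j X h,
        fun j => (ihR j (hU.moveR_mem X hX j)).1 (((oR_iff X).1 h).2.2 j)⟩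

lemma one_add_oL (Y : Aug) (h : oR Y) : oL (one + Y) :=
  oL_add_left (A := one) (0 : Fin 1) ((zero_add_out Y).2.2 h)

lemma claimS1 {U : Set Aug} (hU : IsUniverse U)
    (hd : ∀ X ∈ U, LeftEnd X → ¬ Disintegrator X) (X : Aug) (hX : X ∈ U) :
    (oL X → oL (one + oneConj + X)) ∧ (oR X → oR (one + oneConj + X)) := by
  obtain ⟨h1, h2, h3, h4, h5, ⟨i0, h6⟩, h7, h8, h9⟩ := one_add_moves oneConj
  refine claimA hU hd _ ?_ ?_ ?_ ?_ X hX
  · rw [h2]; rfl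
  · rw [h4]; simp [oneConj, numR]
  · exact ⟨i0, fun Y hY => by rw [h6]; exact (zero_add_OEq _ Y).2.2 hY⟩
  · intro j Y hY
    obtain ⟨i', e⟩ := h8 j
    rw [e, oL_one_add]
    exact Or.inr (Or.inr (Or.inl ((zero_add_out Y).2.2 hY)))

/-- commuting two summands does not change outcomes in context -/
lemma comm_OEq (A : Aug) : ∀ B, OEq (A + B) (B + A) := by
  have tl : ∀ A B : Aug, (A + B).tombL = (A.tombL || B.tombL) := by
    intro A B; cases A; cases B; rfl
  have tr : ∀ A B : Aug, (A + B).tombR = (A.tombR || B.tombR) := by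
    intro A B; cases A; cases B; rfl
  have nl : ∀ A B : Aug, (A + B).numL = A.numL + B.numL := by
    intro A B; cases A; cases B; rfl
  have nr : ∀ A B : Aug, (A + B).numR = A.numR + B.numR := by
    intro A B; cases A; cases B; rfl
  have exL : ∀ (P : Aug → Prop) (A B : Aug), (∃ i, P ((A + B).moveL i)) ↔
      (∃ i, P (A.moveL i + B)) ∨ ∃ j, P (A + B.moveL j) := by
    intro P A B
    obtain ⟨m, n, L, R, tl, tr⟩ := A
    obtain ⟨m', n', L', R', tl', tr'⟩ := B
    rw [add_mk]
    simp only [moveL, numL]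
    constructor
    · rintro ⟨i, hi⟩
      induction i using Fin.addCases with
      | left i => left; exact ⟨i, by simpa using hi⟩
      | right i => right; exact ⟨i, by simpa using hi⟩
    · rintro (⟨i, hi⟩ | ⟨i, hi⟩)
      · exact ⟨Fin.castAdd _ i, by simpa using hi⟩
      · exact ⟨Fin.natAdd _ i, by simpa using hi⟩
  have allR : ∀ (P : Aug → Prop) (A B : Aug), (∀ i, P ((A + B).moveR i)) ↔
      (∀ i, P (A.moveR i + B)) ∧ ∀ j, P (A + B.moveR j) := by
    intro P A B
    obtain ⟨m, n, L, R, tl, tr⟩ := A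
    obtain ⟨m', n', L', R', tl', tr'⟩ := B
    rw [add_mk]
    simp only [moveR, numR]
    constructor
    · intro h
      exact ⟨fun i => by simpa using h (Fin.castAdd _ i),
        fun i => by simpa using h (Fin.natAdd _ i)⟩
    · rintro ⟨h1, h2⟩ i
      induction i using Fin.addCases with
      | left i => simpa using h1 i
      | right i => simpa using h2 i
  induction A using ind with
  | h A aL aR =>
    intro B
    induction B using ind with
    | h B bL bR =>
      intro Y
      induction Y using ind with
      | h Y yL yR =>
        constructor
        · rw [oL_add, oL_add, tl, tl, Bool.or_comm,
            exL (fun G => oR (G + Y)), exL (fun G => oR (G + Y))]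
          refine or_congr Iff.rfl (or_congr Iff.rfl (or_congr (by rw [nl, nl, Nat.add_comm]) (or_congr ?_ ?_)))
          · rw [or_comm]
            exact or_congr (exists_congr fun j => (bL j Y).2) (exists_congr fun j => (aL j B Y).2)
          · exact exists_congr fun j => (yL j).2
        · rw [oR_add, oR_add, tr, tr, Bool.or_comm,
            allR (fun G => oL (G + Y)), allR (fun G => oL (G + Y))]
          refine and_congr Iff.rfl (and_congr Iff.rfl (and_congr (by rw [nr, nr, Nat.add_comm]) (and_congr ?_ ?_)))
          · rw [and_comm]
            exact and_congr (forall_congr' fun j => (bR j Y).1)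
              (forall_congr' fun j => (aR j B Y).1)
          · exact forall_congr' fun j => (yR j).1

lemma backward {U : Set Aug} (hU : IsUniverse U) (h1 : one ∈ hatU U)
    (hd : ∀ X ∈ U, LeftEnd X → ¬ Disintegrator X) : InvertibleHat U one := by
  refine ⟨oneConj, ?_, ?_⟩
  · obtain ⟨G, hG, hE⟩ := h1
    refine ⟨conj G, hU.conj_mem G hG, ?_⟩
    rw [← conj_one]
    exact conj_equiv hU hE
  · intro X hX
    have a := claimS1 hU hd X hX
    have b := claimS1 hU hd _ (hU.conj_mem X hX)
    have e : one + oneConj + conj X = conj (oneConj + one + X) := by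
      rw [conj_add, conj_add, conj_one, ← conj_one, conj_conj]
    rw [e, (conj_oL _).1, (conj_oL _).2, (conj_oL _).1, (conj_oL _).2,
      (comm_OEq oneConj one X).1, (comm_OEq oneConj one X).2] at b
    have z := zero_add_out X
    unfold outEq
    rw [z.1, z.2]
    tauto

end Aug

/-- if `1 ∈ Û`, then `1` is `U`-invertible iff `U` contains no
Left end that is a disintegrator. -/
theorem stmt13 (U : Set Aug) (hU : Aug.IsUniverse U) (h1 : Aug.one ∈ Aug.hatU U) :
    Aug.InvertibleHat U Aug.one ↔
      ∀ X ∈ U, Aug.LeftEnd X → ¬ Aug.Disintegrator X :=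
  ⟨Aug.forward hU, Aug.backward hU h1⟩
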